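/- arXiv:1401.6039 — 2 statements merged into one kernel-verified Lean document; each statement's English description precedes it below -/
import Mathlib

section
/- Optimizing the constant-composition E_0 coefficient over compositions recovers the unconstrained sphere packing coefficient: for every classical-quantum channel x ↦ S_x with finite input alphabet X and every ρ ≥ 0, max over probability distributions P on X of E_0^cc(ρ,P) equals min over density operators F on H of max_{x∈X} [−(1+ρ) log Tr(S_x^{1/(1+ρ)} F^{ρ/(1+ρ)})], the maximum and minimum being exchangeable because the objective is affine in P and convex in F. -/
open scoped BigOperators ComplexOrder
noncomputable section

namespace SPB

/-- `-log t` with the convention that it is `+∞` for `t ≤ 0`. -/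
def negLog (t : ℝ) : EReal := if t ≤ 0 then (⊤ : EReal) else ((-Real.log t : ℝ) : EReal)

/-- Power of a positive semidefinite (more generally Hermitian) matrix by functional calculus
on the eigenvalues, with the convention `0 ^ r = 0` (so `A ^ 0` is the projection onto the
range of `A`). -/
def mpow {ι : Type*} [Fintype ι] [DecidableEq ι] (A : Matrix ι ι ℂ) (r : ℝ) :
    Matrix ι ι ℂ :=
  if hA : A.IsHermitian then
    (hA.eigenvectorUnitary : Matrix ι ι ℂ) *
      Matrix.diagonal (fun i => ((if hA.eigenvalues i = 0 then (0 : ℝ)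
        else hA.eigenvalues i ^ r : ℝ) : ℂ)) *
      (star (hA.eigenvectorUnitary : Matrix ι ι ℂ))
  else 0

/-- A density operator: positive semidefinite with trace one. -/
def IsDensity {ι : Type*} [Fintype ι] [DecidableEq ι] (A : Matrix ι ι ℂ) : Prop :=
  A.PosSemidef ∧ A.trace = 1

/-- A probability distribution on a finite alphabet. -/
def IsProbDist {X : Type*} [Fintype X] (P : X → ℝ) : Prop :=
  (∀ x, 0 ≤ P x) ∧ ∑ x, P x = 1

/-- The constant–composition sphere packing coefficient
`E₀^cc(ρ,P) = min_F -(1+ρ) ∑ₓ P(x) log Tr(Sₓ^{1/(1+ρ)} F^{ρ/(1+ρ)})`. -/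
def E0cc {X : Type*} [Fintype X] {d : ℕ} (S : X → Matrix (Fin d) (Fin d) ℂ)
    (ρ : ℝ) (P : X → ℝ) : EReal :=
  ⨅ F : {F : Matrix (Fin d) (Fin d) ℂ // IsDensity F},
    ((1 + ρ : ℝ) : EReal) *
      ∑ x, ((P x : ℝ) : EReal) *
        negLog ((Matrix.trace (mpow (S x) (1 / (1 + ρ)) * mpow F.1 (ρ / (1 + ρ)))).re)

lemma negLog_le {t v : ℝ} (h : Real.exp (-v) ≤ t) : negLog t ≤ (v : EReal) := by
  have ht : 0 < t := (Real.exp_pos _).trans_le h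
  rw [negLog, if_neg (not_le.mpr ht)]
  have := (Real.le_log_iff_exp_le ht).mpr h
  exact_mod_cast (by linarith : -Real.log t ≤ v)

lemma negLog_ne_bot (t : ℝ) : negLog t ≠ ⊥ := by
  unfold negLog; split_ifs
  · simp
  · exact EReal.coe_ne_bot _

lemma term_ne_bot {p : ℝ} (hp : 0 ≤ p) (t : ℝ) : (p : EReal) * negLog t ≠ ⊥ := by
  unfold negLog; split_ifs
  · rcases hp.eq_or_lt with h | h
    · rw [← h]; simp
    · rw [EReal.coe_mul_top_of_pos h]; simp
  · rw [← EReal.coe_mul]; exact EReal.coe_ne_bot _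

lemma sum_ne_bot {X : Type*} (s : Finset X) (f : X → EReal) (h : ∀ x ∈ s, f x ≠ ⊥) :
    ∑ x ∈ s, f x ≠ ⊥ := by
  classical
  induction s using Finset.induction_on with
  | empty => simp
  | insert a s ha ih =>
    rw [Finset.sum_insert ha]
    simp only [ne_eq, EReal.add_eq_bot_iff, not_or]
    exact ⟨h a (Finset.mem_insert_self _ _), ih fun x hx => h x (Finset.mem_insert_of_mem hx)⟩

lemma coe_sum' {X : Type*} (s : Finset X) (f : X → ℝ) :
    ∑ x ∈ s, (f x : EReal) = ((∑ x ∈ s, f x : ℝ) : EReal) := by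
  classical
  induction s using Finset.induction_on with
  | empty => simp
  | insert a s ha ih => rw [Finset.sum_insert ha, Finset.sum_insert ha, ih, EReal.coe_add]

lemma minimax_abstract {X E : Type*} [Fintype X] [DecidableEq X] [Nonempty X]
    [AddCommGroup E] [Module ℝ E] (D : E → Prop) (hD : Convex ℝ {F | D F})
    (g : X → E → ℝ) (hg : ∀ x, ConcaveOn ℝ {F | D F} (g x)) (hg0 : ∀ x F, D F → 0 ≤ g x F)
    (F₀ : E) (hF₀ : D F₀) (hpos : ∀ x, 0 < g x F₀) (k : ℝ) (hk : 0 < k) :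
    (⨅ F : {F : E // D F}, ⨆ x : X, (k : EReal) * negLog (g x F.1)) ≤
      ⨆ P : {P : X → ℝ // IsProbDist P}, ⨅ F : {F : E // D F},
        (k : EReal) * ∑ x, ((P.1 x : ℝ) : EReal) * negLog (g x F.1) := by
  rw [← EReal.ge_of_forall_gt_iff_ge]
  intro c hc
  let C : Set (X → ℝ) := {v | ∃ F, D F ∧ ∀ x, Real.exp (-(v x)) ≤ g x F}
  let T : Set (X → ℝ) := Set.pi Set.univ fun _ => Set.Iio (c / k)
  have hCc : Convex ℝ C := by
    rintro v ⟨F, hF, hvF⟩ w ⟨G, hG, hwG⟩ a b ha hb hab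
    refine ⟨a • F + b • G, hD hF hG ha hb hab, fun x => ?_⟩
    have h1 := (hg x).2 hF hG ha hb hab
    have h2 := convexOn_exp.2 (Set.mem_univ (-(v x))) (Set.mem_univ (-(w x))) ha hb hab
    simp only [smul_eq_mul, Pi.add_apply, Pi.smul_apply] at h1 h2 ⊢
    have e : -(a * v x + b * w x) = a * -v x + b * -w x := by ring
    rw [e]
    have := mul_le_mul_of_nonneg_left (hvF x) ha
    have := mul_le_mul_of_nonneg_left (hwG x) hb
    linarith
  have hTc : Convex ℝ T := convex_pi fun _ _ => convex_Iio _
  have hTo : IsOpen T := isOpen_set_pi Set.finite_univ fun _ _ => isOpen_Iio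
  have hdis : Disjoint T C := by
    rw [Set.disjoint_left]
    rintro v hv ⟨F, hF, hvF⟩
    refine absurd (hc.trans_le (iInf_le _ ⟨F, hF⟩)) (not_lt.mpr (iSup_le fun x => ?_))
    have h1 : (k : EReal) * negLog (g x F) ≤ (k : EReal) * (v x : EReal) :=
      mul_le_mul_of_nonneg_left (negLog_le (hvF x)) (by exact_mod_cast hk.le)
    refine h1.trans ?_
    have : v x < c / k := hv x trivial
    rw [lt_div_iff₀ hk] at this
    exact_mod_cast (by linarith : k * v x ≤ c)
  obtain ⟨f, u, hfT, hfC⟩ := geometric_hahn_banach_open hTc hTo hCc hdis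
  set p : X → ℝ := fun x => f (Pi.single x 1) with hp
  have hf : ∀ v, f v = ∑ x, v x * p x := by
    intro v
    conv_lhs => rw [pi_eq_sum_univ' v]
    simp [hp, map_sum, Pi.single]
  have hC0 : (fun x => -Real.log (g x F₀)) ∈ C := ⟨F₀, hF₀, fun x => by
    simp [Real.exp_log (hpos x)]⟩
  have hp0 : ∀ x, 0 ≤ p x := by
    intro x
    by_contra! hx
    set v₀ : X → ℝ := fun x => -Real.log (g x F₀) with hv₀
    obtain ⟨n, hn⟩ := exists_nat_gt ((f v₀ - u) / (-p x))
    rw [div_lt_iff₀ (by linarith)] at hn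
    have hm : v₀ + (n : ℝ) • Pi.single x (1 : ℝ) ∈ C := by
      refine ⟨F₀, hF₀, fun y => ?_⟩
      have h1 : (0 : ℝ) ≤ ((n : ℝ) • (Pi.single x (1 : ℝ) : X → ℝ)) y := by
        have : (0 : X → ℝ) ≤ Pi.single x (1 : ℝ) := Pi.single_nonneg.mpr zero_le_one
        exact mul_nonneg (Nat.cast_nonneg n) (this y)
      calc Real.exp _ ≤ Real.exp (Real.log (g y F₀)) := by
            apply Real.exp_le_exp.mpr
            simp only [Pi.add_apply, hv₀] at h1 ⊢
            linarith
        _ = _ := Real.exp_log (hpos y)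
    have := hfC _ hm
    rw [map_add, map_smul, smul_eq_mul] at this
    change u ≤ f v₀ + n * p x at this
    linarith
  have hσ : 0 < ∑ x, p x := by
    refine (Finset.sum_nonneg fun x _ => hp0 x).lt_of_ne fun h0 => ?_
    have hz := (Finset.sum_eq_zero_iff_of_nonneg (fun x _ => hp0 x)).mp h0.symm
    have h1 := hfT (fun _ => c / k - 1) (fun _ _ => by simp)
    have h2 := hfC _ hC0
    rw [hf, Finset.sum_eq_zero (fun x hx => by rw [hz x hx, mul_zero])] at h1 h2
    linarith
  set σ := ∑ x, p x with hσd
  have hu : σ * (c / k) ≤ u := by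
    refine le_of_forall_pos_le_add fun δ hδ => ?_
    have h1 := hfT (fun _ => c / k - δ / σ) (fun _ _ => by simp; positivity)
    rw [hf, ← Finset.mul_sum, ← hσd, sub_mul, div_mul_cancel₀ _ hσ.ne'] at h1
    linarith
  let Q : {P : X → ℝ // IsProbDist P} := ⟨fun x => p x / σ,
    fun x => div_nonneg (hp0 x) hσ.le, by rw [← Finset.sum_div, div_self hσ.ne']⟩
  refine le_iSup_of_le Q (le_iInf fun F => ?_)
  obtain ⟨F, hF⟩ := F
  by_cases hbad : ∃ x, 0 < p x ∧ g x F ≤ 0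
  · obtain ⟨x, hx, hgx⟩ := hbad
    have : ∑ x, ((Q.1 x : ℝ) : EReal) * negLog (g x F) = ⊤ := by
      rw [← Finset.add_sum_erase _ _ (Finset.mem_univ x)]
      have : ((Q.1 x : ℝ) : EReal) * negLog (g x F) = ⊤ := by
        rw [negLog, if_pos hgx]
        exact EReal.coe_mul_top_of_pos (div_pos hx hσ)
      rw [this]
      exact EReal.top_add_of_ne_bot (sum_ne_bot _ _ fun y _ => term_ne_bot (Q.2.1 y) _)
    show (c : EReal) ≤ (k : EReal) * ∑ x, ((Q.1 x : ℝ) : EReal) * negLog (g x F)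
    rw [this, EReal.coe_mul_top_of_pos hk]
    exact le_top
  · push Not at hbad
    have hsum : ∑ x, ((Q.1 x : ℝ) : EReal) * negLog (g x F) =
        ((∑ x, p x / σ * -Real.log (g x F) : ℝ) : EReal) := by
      rw [← coe_sum']
      refine Finset.sum_congr rfl fun x _ => ?_
      change ((p x / σ : ℝ) : EReal) * negLog (g x F) = _
      rcases (hp0 x).eq_or_lt with h | h
      · rw [← h]; simp
      · rw [negLog, if_neg (not_le.mpr (hbad x h)), EReal.coe_mul]
    show (c : EReal) ≤ (k : EReal) * ∑ x, ((Q.1 x : ℝ) : EReal) * negLog (g x F)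
    rw [hsum, ← EReal.coe_mul, EReal.coe_le_coe_iff]
    have key : u ≤ ∑ x, p x * -Real.log (g x F) := by
      refine le_of_forall_pos_le_add fun η hη => ?_
      set ε := 1 - Real.exp (-(η / σ)) with hε
      have hε1 : 0 < 1 - ε := by rw [hε]; simpa using Real.exp_pos _
      have hε0 : 0 < ε := by
        have : Real.exp (-(η / σ)) < 1 := by
          rw [← Real.exp_zero]; apply Real.exp_lt_exp.mpr; have := div_pos hη hσ; linarith
        linarith
      let v : X → ℝ := fun x => if 0 < g x F then -Real.log (g x F) + η / σ
        else -Real.log (ε * g x F₀)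
      have hv : v ∈ C := by
        refine ⟨(1 - ε) • F + ε • F₀, hD hF hF₀ hε1.le hε0.le (by ring), fun x => ?_⟩
        have h1 := (hg x).2 hF hF₀ hε1.le hε0.le (by ring)
        simp only [smul_eq_mul] at h1
        refine le_trans ?_ h1
        have h2 : 0 < ε * g x F₀ := mul_pos hε0 (hpos x)
        have h3 := hg0 x F hF
        simp only [v]
        split_ifs with h
        · have : Real.exp (-(-Real.log (g x F) + η / σ)) = (1 - ε) * g x F := by
            rw [neg_add, neg_neg, Real.exp_add, Real.exp_log h, hε]; ring
          rw [this]; linarith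
        · rw [neg_neg, Real.exp_log h2]
          have := mul_nonneg hε1.le h3
          linarith
      refine (hfC v hv).trans ?_
      rw [hf]
      have : η = ∑ x, p x * (η / σ) := by
        rw [← Finset.sum_mul, ← hσd]; field_simp
      rw [this, ← Finset.sum_add_distrib]
      refine Finset.sum_le_sum fun x _ => ?_
      rcases (hp0 x).eq_or_lt with h | h
      · rw [← h]; simp
      · simp only [v, if_pos (hbad x h)]
        linarith
    have e : k * ∑ x, p x / σ * -Real.log (g x F) = k / σ * ∑ x, p x * -Real.log (g x F) := by
      rw [Finset.mul_sum, Finset.mul_sum]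
      refine Finset.sum_congr rfl fun x _ => by ring
    rw [e]
    have h5 := mul_le_mul_of_nonneg_left (hu.trans key) (div_pos hk hσ).le
    have e2 : k / σ * (σ * (c / k)) = c := by field_simp
    linarith

section mat
open scoped MatrixOrder Matrix.Norms.L2Operator
variable {ι : Type*} [Fintype ι] [DecidableEq ι]

lemma mpow_eq_cfc {A : Matrix ι ι ℂ} (hA : A.IsHermitian) (r : ℝ) :
    mpow A r = cfc (fun x : ℝ => if x = 0 then (0 : ℝ) else x ^ r) A := by
  rw [hA.cfc_eq, mpow, dif_pos hA, Matrix.IsHermitian.cfc, Unitary.conjStarAlgAut_apply]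
  rfl

lemma mpow_eq_rpow {A : Matrix ι ι ℂ} (hA : A.PosSemidef) {r : ℝ} (hr : 0 < r) :
    mpow A r = A ^ r := by
  rw [mpow_eq_cfc hA.1, CFC.rpow_eq_cfc_real hA.nonneg]
  congr 1
  funext x
  split_ifs with h
  · rw [h, Real.zero_rpow hr.ne']
  · rfl

lemma mpow_psd {A : Matrix ι ι ℂ} (hA : A.PosSemidef) (r : ℝ) : (mpow A r).PosSemidef := by
  rw [mpow, dif_pos hA.1]
  refine Matrix.PosSemidef.mul_mul_conjTranspose_same (Matrix.PosSemidef.diagonal fun i => ?_) _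
  have := hA.eigenvalues_nonneg i
  simp only [Pi.zero_apply]
  rw [Complex.zero_le_real]
  split_ifs
  · exact le_rfl
  · exact Real.rpow_nonneg this r

lemma trace_mul_psd {A B : Matrix ι ι ℂ} (hA : A.PosSemidef) (hB : B.PosSemidef) :
    0 ≤ (A * B).trace.re := by
  obtain ⟨C, rfl⟩ := CStarAlgebra.nonneg_iff_eq_star_mul_self.mp hB.nonneg
  rw [← mul_assoc, Matrix.trace_mul_comm, ← mul_assoc]
  have := (hA.mul_mul_conjTranspose_same C).trace_nonneg
  exact (Complex.le_def.mp this).1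

lemma mpow_trace_pos {A : Matrix ι ι ℂ} (hA : IsDensity A) (r : ℝ) : 0 < (mpow A r).trace.re := by
  have h := hA.1.1
  rw [mpow, dif_pos h, Matrix.trace_mul_comm, ← mul_assoc, Unitary.coe_star_mul_self, one_mul,
    Matrix.trace_diagonal, Complex.re_sum]
  simp only [Complex.ofReal_re]
  have hn : ∀ i, 0 ≤ if h.eigenvalues i = 0 then (0 : ℝ) else h.eigenvalues i ^ r := by
    intro i
    split_ifs
    · exact le_rfl
    · exact Real.rpow_nonneg (hA.1.eigenvalues_nonneg i) r
  have : ∃ i, h.eigenvalues i ≠ 0 := by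
    by_contra! h0
    have := h.trace_eq_sum_eigenvalues
    rw [hA.2] at this
    simp [h0] at this
  obtain ⟨i, hi⟩ := this
  refine Finset.sum_pos' (fun i _ => hn i) ⟨i, Finset.mem_univ _, ?_⟩
  rw [if_neg hi]
  exact Real.rpow_pos_of_pos ((hA.1.eigenvalues_nonneg i).lt_of_ne' hi) r

lemma continuous_mpow {A : Matrix ι ι ℂ} (hA : A.PosSemidef) : Continuous fun r => mpow A r := by
  unfold mpow
  simp only [dif_pos hA.1]
  refine (continuous_const.matrix_mul (Continuous.matrix_diagonal ?_)).matrix_mul continuous_const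
  refine continuous_pi fun i => Complex.continuous_ofReal.comp ?_
  split_ifs with h
  · exact continuous_const
  · exact Real.continuous_const_rpow h

lemma convex_density : Convex ℝ {F : Matrix ι ι ℂ | IsDensity F} := by
  rintro F ⟨hF, hF1⟩ G ⟨hG, hG1⟩ a b ha hb hab
  refine ⟨Matrix.nonneg_iff_posSemidef.mp
    (add_nonneg (smul_nonneg ha hF.nonneg) (smul_nonneg hb hG.nonneg)), ?_⟩
  rw [Matrix.trace_add, Matrix.trace_smul, Matrix.trace_smul, hF1, hG1, ← add_smul, hab, one_smul]

lemma concave_aux {A : Matrix ι ι ℂ} (hA : A.PosSemidef) {s : ℝ} (hs : 0 < s) (hs1 : s < 1)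
    {F G : Matrix ι ι ℂ} (hF : IsDensity F) (hG : IsDensity G) {a b : ℝ} (ha : 0 ≤ a) (hb : 0 ≤ b)
    (hab : a + b = 1) :
    a * (A * mpow F s).trace.re + b * (A * mpow G s).trace.re
      ≤ (A * mpow (a • F + b • G) s).trace.re := by
  have hH := convex_density hF hG ha hb hab
  rw [mpow_eq_rpow hF.1 hs, mpow_eq_rpow hG.1 hs, mpow_eq_rpow hH.1 hs]
  have h := (CFC.concaveOn_rpow (A := Matrix ι ι ℂ) (p := s) ⟨hs.le, hs1.le⟩).2
    hF.1.nonneg hG.1.nonneg ha hb hab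
  have h2 := trace_mul_psd hA (Matrix.le_iff.mp h)
  rw [mul_sub, mul_add, Matrix.trace_sub, Matrix.trace_add, Matrix.mul_smul, Matrix.mul_smul,
    Matrix.trace_smul, Matrix.trace_smul, Complex.sub_re, Complex.add_re, Complex.smul_re,
    Complex.smul_re] at h2
  simp only [smul_eq_mul] at h2
  linarith

lemma concave_g {A : Matrix ι ι ℂ} (hA : A.PosSemidef) {s : ℝ} (hs : 0 ≤ s) (hs1 : s < 1) :
    ConcaveOn ℝ {F : Matrix ι ι ℂ | IsDensity F} (fun F => (A * mpow F s).trace.re) := by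
  refine ⟨convex_density, fun F hF G hG a b ha hb hab => ?_⟩
  simp only [smul_eq_mul]
  have hH := convex_density hF hG ha hb hab
  have hc : ∀ F : Matrix ι ι ℂ, IsDensity F →
      Filter.Tendsto (fun s => (A * mpow F s).trace.re) (nhdsWithin s (Set.Ioi s))
        (nhds (A * mpow F s).trace.re) := fun F hF =>
    ((Complex.continuous_re.comp (continuous_const.matrix_mul
      (continuous_mpow hF.1)).matrix_trace).tendsto s).mono_left nhdsWithin_le_nhds
  refine le_of_tendsto_of_tendsto (((hc F hF).const_mul a).add ((hc G hG).const_mul b))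
    (hc _ hH) ?_
  filter_upwards [Ioo_mem_nhdsGT hs1] with t ht
  exact concave_aux hA (hs.trans_lt ht.1) ht.2 hF hG ha hb hab

lemma exists_center [Nonempty ι] (s : ℝ) : ∃ F₀ : Matrix ι ι ℂ, IsDensity F₀ ∧
    ∀ A : Matrix ι ι ℂ, 0 < A.trace.re → 0 < (A * mpow F₀ s).trace.re := by
  have hn : (0 : ℝ) < Fintype.card ι := by exact_mod_cast Fintype.card_pos
  set c : ℝ := (Fintype.card ι : ℝ)⁻¹ with hc
  have hc0 : 0 < c := inv_pos.mpr hn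
  have hpsd : (algebraMap ℝ (Matrix ι ι ℂ) c).PosSemidef := by
    rw [Algebra.algebraMap_eq_smul_one]
    exact Matrix.nonneg_iff_posSemidef.mp (smul_nonneg hc0.le Matrix.PosSemidef.one.nonneg)
  refine ⟨algebraMap ℝ _ c, ⟨hpsd, ?_⟩, fun A hA => ?_⟩
  · rw [Algebra.algebraMap_eq_smul_one, Matrix.trace_smul, Matrix.trace_one, hc]
    rw [Complex.real_smul]
    push_cast
    exact inv_mul_cancel₀ (by exact_mod_cast hn.ne')
  · rw [mpow_eq_cfc hpsd.1, cfc_algebraMap, if_neg hc0.ne', Algebra.algebraMap_eq_smul_one,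
      Matrix.mul_smul, mul_one, Matrix.trace_smul, Complex.smul_re]
    exact mul_pos (Real.rpow_pos_of_pos hc0 s) hA
end mat

/-- Optimizing `E₀^cc(ρ,P)` over compositions `P` recovers the unconstrained sphere packing
coefficient `E₀(ρ) = min_F max_x [-(1+ρ) log Tr(Sₓ^{1/(1+ρ)} F^{ρ/(1+ρ)})]`. -/
theorem max_E0cc_eq_min_max
    {X : Type*} [Fintype X] [DecidableEq X] [Nonempty X] {d : ℕ}
    (S : X → Matrix (Fin d) (Fin d) ℂ) (hS : ∀ x, IsDensity (S x))
    (ρ : ℝ) (hρ : 0 ≤ ρ) :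
    (⨆ P : {P : X → ℝ // IsProbDist P}, E0cc S ρ P.1) =
      ⨅ F : {F : Matrix (Fin d) (Fin d) ℂ // IsDensity F},
        ⨆ x : X, ((1 + ρ : ℝ) : EReal) *
          negLog ((Matrix.trace (mpow (S x) (1 / (1 + ρ)) * mpow F.1 (ρ / (1 + ρ)))).re) := by
  have hk : (0 : ℝ) < 1 + ρ := by linarith
  apply le_antisymm
  · refine iSup_le fun P => le_iInf fun F => (iInf_le _ F).trans ?_
    set h : X → EReal := fun x =>
      negLog ((Matrix.trace (mpow (S x) (1 / (1 + ρ)) * mpow F.1 (ρ / (1 + ρ)))).re) with hh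
    obtain ⟨y, hy⟩ := Finite.exists_max h
    refine le_trans ?_ (le_iSup (fun x => ((1 + ρ : ℝ) : EReal) * h x) y)
    refine mul_le_mul_of_nonneg_left ?_ (by exact_mod_cast hk.le)
    calc ∑ x, ((P.1 x : ℝ) : EReal) * h x ≤ ∑ x, ((P.1 x : ℝ) : EReal) * h y :=
          Finset.sum_le_sum fun x _ =>
            mul_le_mul_of_nonneg_left (hy x) (by exact_mod_cast P.2.1 x)
      _ = h y := by
          rcases eq_or_ne (h y) ⊤ with ht | ht
          · obtain ⟨z, -, hz⟩ : ∃ z ∈ Finset.univ, 0 < P.1 z := by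
              by_contra! h0
              have := Finset.sum_nonpos h0
              rw [P.2.2] at this
              linarith
            rw [← Finset.add_sum_erase _ _ (Finset.mem_univ z), ht,
              EReal.coe_mul_top_of_pos hz]
            refine EReal.top_add_of_ne_bot (sum_ne_bot _ _ fun x _ => ?_)
            have := term_ne_bot (P.2.1 x) 0
            rwa [negLog, if_pos le_rfl] at this
          · have hb : h y ≠ ⊥ := negLog_ne_bot _
            lift h y to ℝ using ⟨ht, hb⟩ with r
            simp_rw [← EReal.coe_mul]
            rw [coe_sum', ← Finset.sum_mul, P.2.2, one_mul]
  · have hd : Nonempty (Fin d) := by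
      by_contra hne
      rw [not_nonempty_iff] at hne
      have := (hS (Classical.arbitrary X)).2
      simp [Matrix.trace] at this
    obtain ⟨F₀, hF₀, hF₀p⟩ := exists_center (ι := Fin d) (ρ / (1 + ρ))
    have hs0 : 0 ≤ ρ / (1 + ρ) := div_nonneg hρ hk.le
    have hs1 : ρ / (1 + ρ) < 1 := by rw [div_lt_one hk]; linarith
    exact minimax_abstract (X := X) (fun F : Matrix (Fin d) (Fin d) ℂ => IsDensity F)
      convex_density
      (fun x F => (Matrix.trace (mpow (S x) (1 / (1 + ρ)) * mpow F (ρ / (1 + ρ)))).re)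
      (fun x => concave_g (mpow_psd (hS x).1 _) hs0 hs1)
      (fun x F hF => trace_mul_psd (mpow_psd (hS x).1 _) (mpow_psd hF.1 _))
      F₀ hF₀ (fun x => hF₀p _ (mpow_trace_pos (hS x) _)) (1 + ρ) hk

end SPB
end
end

section
/- Conditional version of the cutoff-rate inequality for pure-state channels: let A and X be finite sets, and for each a ∈ A let x ↦ S_{a,x} = |ψ_{a,x}⟩⟨ψ_{a,x}| be a pure-state classical-quantum channel on H = ℂ^d. Let P be a probability distribution on A and, for each a, let V(·|a) be a probability distribution on X. Define E_0^cc(ρ,P,V) = Σ_{a∈A} P(a) E_0^cc(C_a, ρ, V(·|a)) and R_∞(P,V) = Σ_{a∈A} P(a) R_∞(C_a, V(·|a)). Then sup_{ρ ≥ 0} [E_0^cc(ρ,P,V) − ρ R_∞(P,V)] ≤ R_∞(P,V); that is, the conditional sphere packing exponent evaluated at rate R_∞(P,V) is at most R_∞(P,V). -/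
open scoped BigOperators ComplexOrder
noncomputable section

namespace SPB

/-- The pure state (rank-one projection) `|ψ⟩⟨ψ|` associated with a vector `ψ ∈ ℂ^d`. -/
def pureState {d : ℕ} (ψ : Fin d → ℂ) : Matrix (Fin d) (Fin d) ℂ :=
  Matrix.of fun i j => ψ i * (starRingEnd ℂ) (ψ j)

/-- The cutoff rate `R_∞(P) = min_F -∑ₓ P(x) log Tr(Sₓ F)` (for pure-state channels). -/
def RinfPure {X : Type*} [Fintype X] {d : ℕ} (S : X → Matrix (Fin d) (Fin d) ℂ)
    (P : X → ℝ) : EReal :=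
  ⨅ F : {F : Matrix (Fin d) (Fin d) ℂ // IsDensity F},
    ∑ x, ((P x : ℝ) : EReal) * negLog ((Matrix.trace (S x * F.1)).re)

open scoped Matrix

lemma negLog_anti {s t : ℝ} (h : s ≤ t) : negLog t ≤ negLog s := by
  unfold negLog
  by_cases hs : s ≤ 0
  · simp [hs]
  · have hs' : 0 < s := not_le.mp hs
    have ht : ¬ t ≤ 0 := by linarith
    rw [if_neg hs, if_neg ht]
    exact_mod_cast neg_le_neg (Real.log_le_log hs' h)

lemma negLog_nonneg {t : ℝ} (h : t ≤ 1) : 0 ≤ negLog t := by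
  have := negLog_anti h
  have h1 : negLog 1 = 0 := by simp [negLog]
  rwa [h1] at this

lemma pureState_herm {d : ℕ} (ψ : Fin d → ℂ) : (pureState ψ).IsHermitian := by
  ext i j
  simp [pureState, mul_comm]

lemma pureState_eq {d : ℕ} (ψ : Fin d → ℂ) :
    pureState ψ = Matrix.vecMulVec ψ (star ψ) := by
  ext i j
  simp [pureState, Matrix.vecMulVec_apply]

lemma dot_one {d : ℕ} (ψ : Fin d → ℂ) (h : ∑ i, Complex.normSq (ψ i) = 1) :
    star ψ ⬝ᵥ ψ = 1 := by
  have : star ψ ⬝ᵥ ψ = ((∑ i, Complex.normSq (ψ i) : ℝ) : ℂ) := by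
    simp [dotProduct, Complex.normSq_eq_conj_mul_self]
  rw [this, h]; simp

lemma pureState_sq {d : ℕ} (ψ : Fin d → ℂ) (h : ∑ i, Complex.normSq (ψ i) = 1) :
    pureState ψ * pureState ψ = pureState ψ := by
  rw [pureState_eq, Matrix.vecMulVec_mul_vecMulVec, dot_one ψ h]
  simp

lemma herm_eq {d : ℕ} {M : Matrix (Fin d) (Fin d) ℂ} (hA : M.IsHermitian) :
    M = (hA.eigenvectorUnitary : Matrix (Fin d) (Fin d) ℂ) *
      Matrix.diagonal (fun i => ((hA.eigenvalues i : ℝ) : ℂ)) *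
      (star (hA.eigenvectorUnitary : Matrix (Fin d) (Fin d) ℂ)) := by
  have := hA.spectral_theorem
  rw [Unitary.conjStarAlgAut_apply] at this
  exact this

lemma mpow_pure {d : ℕ} (ψ : Fin d → ℂ) (h : ∑ i, Complex.normSq (ψ i) = 1) (r : ℝ) :
    mpow (pureState ψ) r = pureState ψ := by
  have hA := pureState_herm ψ
  unfold mpow
  rw [dif_pos hA]
  conv_rhs => rw [herm_eq hA]
  congr 3
  funext i
  have hv := hA.mulVec_eigenvectorBasis i
  have hl : hA.eigenvalues i * hA.eigenvalues i = hA.eigenvalues i := by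
    have h2 : pureState ψ *ᵥ (pureState ψ *ᵥ (hA.eigenvectorBasis i).ofLp)
        = pureState ψ *ᵥ (hA.eigenvectorBasis i).ofLp := by
      rw [Matrix.mulVec_mulVec, pureState_sq ψ h]
    rw [hv, Matrix.mulVec_smul, hv, smul_smul] at h2
    have hne : (hA.eigenvectorBasis i).ofLp ≠ 0 := by
      intro h0
      have h1 := hA.eigenvectorBasis.orthonormal.ne_zero i
      apply h1
      ext j
      simp [h0]
    exact smul_left_injective ℝ hne h2
  by_cases h0 : hA.eigenvalues i = 0
  · simp [h0]
  · have h1 : hA.eigenvalues i = 1 := mul_left_cancel₀ h0 (by rw [hl, mul_one])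
    simp [h1]

lemma trace_pure {d : ℕ} (ψ : Fin d → ℂ) (M : Matrix (Fin d) (Fin d) ℂ) :
    Matrix.trace (pureState ψ * M) = star ψ ⬝ᵥ (M *ᵥ ψ) := by
  rw [pureState_eq, Matrix.trace_mul_comm, Matrix.mul_vecMulVec, Matrix.trace_vecMulVec,
    dotProduct_comm]

lemma trace_mono {d : ℕ} (ψ : Fin d → ℂ) {M N : Matrix (Fin d) (Fin d) ℂ}
    (h : (N - M).PosSemidef) :
    (Matrix.trace (pureState ψ * M)).re ≤ (Matrix.trace (pureState ψ * N)).re := by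
  have h1 := h.dotProduct_mulVec_nonneg ψ
  rw [← trace_pure, Matrix.mul_sub, Matrix.trace_sub] at h1
  have := (Complex.le_def.mp h1).1
  simp at this
  exact this

lemma conj_psd {d : ℕ} (U : Matrix (Fin d) (Fin d) ℂ) (f : Fin d → ℝ) (hf : ∀ i, 0 ≤ f i) :
    (U * Matrix.diagonal (fun i => ((f i : ℝ) : ℂ)) * star U).PosSemidef := by
  have hD : (Matrix.diagonal (fun i => ((f i : ℝ) : ℂ))).PosSemidef := by
    apply Matrix.PosSemidef.diagonal
    intro i
    show (0 : ℂ) ≤ ((f i : ℝ) : ℂ)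
    exact_mod_cast hf i
  exact hD.mul_mul_conjTranspose_same U

lemma eig_le_one {d : ℕ} {F : Matrix (Fin d) (Fin d) ℂ} (hF : IsDensity F) (i : Fin d) :
    hF.1.1.eigenvalues i ≤ 1 := by
  have h1 : ∑ j, hF.1.1.eigenvalues j = 1 := by
    have := hF.1.1.trace_eq_sum_eigenvalues
    have h2 := this.symm.trans hF.2
    have h3 := congrArg Complex.re h2
    simpa using h3
  rw [← h1]
  exact Finset.single_le_sum (f := hF.1.1.eigenvalues)
    (fun j _ => hF.1.eigenvalues_nonneg j) (Finset.mem_univ i)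

lemma one_sub_psd {d : ℕ} {F : Matrix (Fin d) (Fin d) ℂ} (hF : IsDensity F) :
    (1 - F).PosSemidef := by
  have hA := hF.1.1
  have h := conj_psd (hA.eigenvectorUnitary : Matrix (Fin d) (Fin d) ℂ)
    (fun i => 1 - hA.eigenvalues i) (fun i => sub_nonneg.2 (eig_le_one hF i))
  convert h using 1
  have hd : Matrix.diagonal (fun i => ((1 - hA.eigenvalues i : ℝ) : ℂ)) =
      1 - Matrix.diagonal (fun i => ((hA.eigenvalues i : ℝ) : ℂ)) := by
    rw [← Matrix.diagonal_one, Matrix.diagonal_sub]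
    simp
  rw [hd, mul_sub, sub_mul, ← herm_eq hA, mul_one]
  rw [Unitary.mul_star_self_of_mem hA.eigenvectorUnitary.2]

lemma mpow_sub_psd {d : ℕ} {F : Matrix (Fin d) (Fin d) ℂ} (hF : IsDensity F) {s : ℝ}
    (hs : s ≤ 1) : (mpow F s - F).PosSemidef := by
  have hA := hF.1.1
  have h := conj_psd (hA.eigenvectorUnitary : Matrix (Fin d) (Fin d) ℂ)
    (fun i => (if hA.eigenvalues i = 0 then (0 : ℝ) else hA.eigenvalues i ^ s)
      - hA.eigenvalues i) (fun i => by
        have h0 : 0 ≤ hA.eigenvalues i := hF.1.eigenvalues_nonneg i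
        have h1 : hA.eigenvalues i ≤ 1 := eig_le_one hF i
        split_ifs with hz
        · simp [hz]
        · have hp : 0 < hA.eigenvalues i := lt_of_le_of_ne h0 (Ne.symm hz)
          have := Real.rpow_le_rpow_of_exponent_ge hp h1 hs
          rw [Real.rpow_one] at this
          linarith)
  convert h using 1
  unfold mpow
  rw [dif_pos hA]
  conv_lhs => rw [sub_eq_add_neg]; arg 2; rw [herm_eq hA]
  rw [← sub_eq_add_neg, ← sub_mul, ← mul_sub, Matrix.diagonal_sub]
  congr 3
  funext i
  push_cast
  rfl

lemma Rinf_nonneg {X : Type*} [Fintype X] {d : ℕ} (ψ : X → Fin d → ℂ)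
    (hψ : ∀ x, ∑ i, Complex.normSq (ψ x i) = 1) (V : X → ℝ) (hV : IsProbDist V) :
    0 ≤ RinfPure (fun x => pureState (ψ x)) V := by
  unfold RinfPure
  refine le_iInf fun F => Finset.sum_nonneg fun x _ => mul_nonneg ?_ (negLog_nonneg ?_)
  · exact_mod_cast hV.1 x
  · have := trace_mono (ψ x) (one_sub_psd F.2)
    rw [trace_pure _ 1, Matrix.one_mulVec, dot_one _ (hψ x)] at this
    simpa using this

lemma E0_le {X : Type*} [Fintype X] {d : ℕ} (ψ : X → Fin d → ℂ)
    (hψ : ∀ x, ∑ i, Complex.normSq (ψ x i) = 1) (V : X → ℝ) (hV : IsProbDist V)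
    (ρ : ℝ) (hρ : 0 ≤ ρ) :
    E0cc (fun x => pureState (ψ x)) ρ V ≤
      ((1 + ρ : ℝ) : EReal) * RinfPure (fun x => pureState (ψ x)) V := by
  have hpos : (0 : EReal) < ((1 + ρ : ℝ) : EReal) := by
    exact_mod_cast (by linarith : (0 : ℝ) < 1 + ρ)
  rw [← EReal.div_le_iff_le_mul hpos (EReal.coe_ne_top _)]
  refine le_iInf fun F => ?_
  rw [EReal.div_le_iff_le_mul hpos (EReal.coe_ne_top _)]
  refine (iInf_le _ F).trans ?_
  refine mul_le_mul_of_nonneg_left (Finset.sum_le_sum fun x _ => ?_) hpos.le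
  refine mul_le_mul_of_nonneg_left (negLog_anti ?_) (by exact_mod_cast hV.1 x)
  rw [mpow_pure _ (hψ x)]
  refine trace_mono _ (mpow_sub_psd F.2 ?_)
  rw [div_le_one (by linarith)]
  linarith

lemma mul_sum_nonneg {A : Type*} (s : Finset A) (c : EReal) (f : A → EReal)
    (hf : ∀ a, 0 ≤ f a) : c * ∑ a ∈ s, f a = ∑ a ∈ s, c * f a := by
  classical
  induction s using Finset.induction_on with
  | empty => simp
  | insert a s ha ih =>
    rw [Finset.sum_insert ha, Finset.sum_insert ha,
      EReal.left_distrib_of_nonneg (hf a) (Finset.sum_nonneg fun b _ => hf b), ih]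

/-- **Conditional version of the cutoff-rate inequality for pure-state channels**: with
`E₀^cc(ρ,P,V) = ∑ₐ P(a) E₀^cc(Cₐ,ρ,V(·|a))` and `R_∞(P,V) = ∑ₐ P(a) R_∞(Cₐ,V(·|a))`, we have
`sup_{ρ ≥ 0} [E₀^cc(ρ,P,V) - ρ R_∞(P,V)] ≤ R_∞(P,V)`. -/
theorem conditional_Espcc_at_Rinf_le_Rinf
    {A X : Type*} [Fintype A] [DecidableEq A] [Fintype X] [DecidableEq X] {d : ℕ}
    (ψ : A → X → Fin d → ℂ) (hψ : ∀ a x, ∑ i, Complex.normSq (ψ a x i) = 1)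
    (P : A → ℝ) (hP : IsProbDist P)
    (V : A → X → ℝ) (hV : ∀ a, IsProbDist (V a)) :
    (⨆ ρ : {ρ : ℝ // 0 ≤ ρ},
      (∑ a, ((P a : ℝ) : EReal) * E0cc (fun x => pureState (ψ a x)) ρ.1 (V a)) -
        ((ρ.1 : ℝ) : EReal) *
          ∑ a, ((P a : ℝ) : EReal) * RinfPure (fun x => pureState (ψ a x)) (V a)) ≤
      ∑ a, ((P a : ℝ) : EReal) * RinfPure (fun x => pureState (ψ a x)) (V a) := by
  have hR : ∀ a, 0 ≤ ((P a : ℝ) : EReal) * RinfPure (fun x => pureState (ψ a x)) (V a) :=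
    fun a => mul_nonneg (by exact_mod_cast hP.1 a) (Rinf_nonneg _ (hψ a) _ (hV a))
  refine iSup_le fun ρ => ?_
  have hle : (∑ a, ((P a : ℝ) : EReal) * E0cc (fun x => pureState (ψ a x)) ρ.1 (V a)) ≤
      ((1 + ρ.1 : ℝ) : EReal) *
        ∑ a, ((P a : ℝ) : EReal) * RinfPure (fun x => pureState (ψ a x)) (V a) := by
    rw [mul_sum_nonneg _ _ _ hR]
    refine Finset.sum_le_sum fun a _ => ?_
    rw [mul_left_comm]
    exact mul_le_mul_of_nonneg_left (E0_le _ (hψ a) _ (hV a) _ ρ.2)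
      (by exact_mod_cast hP.1 a)
  have h0 := Finset.sum_nonneg fun a (_ : a ∈ Finset.univ) => hR a
  generalize (∑ a, ((P a : ℝ) : EReal) * RinfPure (fun x => pureState (ψ a x)) (V a)) = R at *
  generalize (∑ a, ((P a : ℝ) : EReal) * E0cc (fun x => pureState (ψ a x)) ρ.1 (V a)) = E at *
  refine (EReal.sub_le_sub hle le_rfl).trans ?_
  induction R with
  | bot => simp at h0
  | top => exact le_top
  | coe r =>
    rw [← EReal.coe_mul, ← EReal.coe_mul, ← EReal.coe_sub, EReal.coe_le_coe_iff]
    linarith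

end SPB
end
end
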